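/- arXiv:2003.07401 — 3 statements merged into one kernel-verified Lean document; each statement's English description precedes it below -/
import Mathlib

section
/- For every rotation matrix R ∈ SO(3), the squared Euclidean norm of vex(P_a(R)) satisfies ‖vex(P_a(R))‖² = 4(1 − ‖R‖_I)‖R‖_I. -/
/-!
For any real `3 × 3` matrix, `‖vex(P_a(A))‖²` is half the squared Frobenius norm of `P_a(A)`, that
is `(tr (Aᵀ A) - tr (A²)) / 4`. For a rotation `R` with `t := tr R`, the first trace is `3`, while
`tr (R²) = t² - 2 tr (adj R) = t² - 2 t` because `adj R = R⁻¹ = Rᵀ`. Hence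
`‖vex(P_a(R))‖² = (3 - t) (1 + t) / 4`, and `‖R‖_I = (3 - t) / 4`.
-/

open Matrix

noncomputable section

/-- The skew-symmetric matrix `[x]×` associated to `x ∈ ℝ³`. -/
def skew (x : Fin 3 → ℝ) : Matrix (Fin 3) (Fin 3) ℝ :=
  !![0, -x 2, x 1; x 2, 0, -x 0; -x 1, x 0, 0]

/-- The anti-symmetric projection `P_a(A) = (A - Aᵀ)/2`. -/
def Pa (A : Matrix (Fin 3) (Fin 3) ℝ) : Matrix (Fin 3) (Fin 3) ℝ :=
  (1/2 : ℝ) • (A - Aᵀ)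

/-- `vex(P_a(A)) = (1/2)(A₃₂−A₂₃, A₁₃−A₃₁, A₂₁−A₁₂)`. -/
def vexPa (A : Matrix (Fin 3) (Fin 3) ℝ) : Fin 3 → ℝ :=
  ![(1/2) * (A 2 1 - A 1 2), (1/2) * (A 0 2 - A 2 0), (1/2) * (A 1 0 - A 0 1)]

/-- Normalized Euclidean distance `‖A‖_I = (1/4)Tr(I₃ − A)`. -/
def normI (A : Matrix (Fin 3) (Fin 3) ℝ) : ℝ :=
  (1/4) * (1 - A).trace

section CommRing

variable {n α : Type*} [Fintype n] [DecidableEq n] [CommRing α]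

theorem adjugate_eq_det_smul_of_mul_eq_one {A B : Matrix n n α} (h : B * A = 1) :
    A.adjugate = A.det • B := by
  calc A.adjugate = B * (A * A.adjugate) := by rw [← Matrix.mul_assoc, h, one_mul]
    _ = A.det • B := by rw [mul_adjugate, Matrix.mul_smul, mul_one]

theorem trace_adjugate_of_transpose_mul_self_eq_one {A : Matrix n n α} (h : Aᵀ * A = 1) :
    A.adjugate.trace = A.det * A.trace := by
  rw [adjugate_eq_det_smul_of_mul_eq_one h, trace_smul, trace_transpose, smul_eq_mul]

theorem trace_mul_self_fin_three (A : Matrix (Fin 3) (Fin 3) α) :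
    (A * A).trace = A.trace ^ 2 - 2 * A.adjugate.trace := by
  rw [adjugate_fin_three]
  simp only [trace_fin_three, mul_apply, Fin.sum_univ_three, of_apply, cons_val]
  ring

end CommRing

section Vex

variable (A : Matrix (Fin 3) (Fin 3) ℝ)

theorem skew_vexPa : skew (vexPa A) = Pa A := by
  ext i j
  fin_cases i <;> fin_cases j <;> simp [skew, vexPa, Pa] <;> ring

theorem trace_transpose_skew_mul_skew (x : Fin 3 → ℝ) :
    ((skew x)ᵀ * skew x).trace = 2 * (x ⬝ᵥ x) := by
  simp only [skew, trace_fin_three, mul_apply, dotProduct, Fin.sum_univ_three, transpose_apply,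
    of_apply, cons_val]
  ring

theorem trace_transpose_Pa_mul_Pa :
    ((Pa A)ᵀ * Pa A).trace = ((Aᵀ * A).trace - (A * A).trace) / 2 := by
  have trace_mul_transpose : (A * Aᵀ).trace = (Aᵀ * A).trace := trace_mul_comm A Aᵀ
  have trace_transpose_sq : (Aᵀ * Aᵀ).trace = (A * A).trace := by
    rw [← transpose_mul, trace_transpose]
  simp only [Pa, transpose_smul, transpose_sub, transpose_transpose, smul_mul_assoc,
    mul_smul_comm, sub_mul, mul_sub, trace_smul, trace_sub, trace_mul_transpose,
    trace_transpose_sq, smul_eq_mul]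
  ring

theorem vexPa_dotProduct_self :
    vexPa A ⬝ᵥ vexPa A = ((Aᵀ * A).trace - (A * A).trace) / 4 := by
  have two_mul_dotProduct := trace_transpose_skew_mul_skew (vexPa A)
  rw [skew_vexPa, trace_transpose_Pa_mul_Pa] at two_mul_dotProduct
  linarith

theorem normI_eq_three_sub_trace_div_four : normI A = (3 - A.trace) / 4 := by
  rw [normI, trace_sub, trace_one, Fintype.card_fin]
  ring

end Vex

/-- Lemma 1, eq. (25): for every `R ∈ SO(3)`,
`‖vex(P_a(R))‖² = 4(1 − ‖R‖_I)‖R‖_I`. -/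
theorem vexPa_sq_norm_of_SO3 (R : Matrix (Fin 3) (Fin 3) ℝ)
    (hR : Rᵀ * R = 1) (hR' : R * Rᵀ = 1) (hdet : R.det = 1) :
    vexPa R ⬝ᵥ vexPa R = 4 * (1 - normI R) * normI R := by
  have trace_transpose_mul : (Rᵀ * R).trace = 3 := by
    rw [hR, trace_one, Fintype.card_fin, Nat.cast_ofNat]
  have trace_adjugate : R.adjugate.trace = R.trace := by
    rw [trace_adjugate_of_transpose_mul_self_eq_one hR, hdet, one_mul]
  calc vexPa R ⬝ᵥ vexPa R = ((Rᵀ * R).trace - (R * R).trace) / 4 := vexPa_dotProduct_self R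
    _ = (3 - (R.trace ^ 2 - 2 * R.trace)) / 4 := by
      rw [trace_transpose_mul, trace_mul_self_fin_three, trace_adjugate]
    _ = 4 * (1 - normI R) * normI R := by
      rw [normI_eq_three_sub_trace_div_four]
      ring
end
end

section
/- Let M ∈ ℝ^{3×3} be symmetric and let M̄ := Tr(M)·I₃ − M. Then for every ρ ∈ ℝ³, with R_ρ(ρ) := (1/(1+‖ρ‖²))·((1−‖ρ‖²)I₃ + 2ρρᵀ + 2[ρ]×), one has (1/4)Tr(M(I₃ − R_ρ(ρ))) = (1/2)·(ρᵀM̄ρ)/(1+‖ρ‖²). -/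
open Matrix

noncomputable section

/-- The Rodriguez-parameter rotation matrix (eq. (65)). -/
def rodr (ρ : Fin 3 → ℝ) : Matrix (Fin 3) (Fin 3) ℝ :=
  (1/(1 + ρ ⬝ᵥ ρ)) • ((1 - ρ ⬝ᵥ ρ) • (1 : Matrix (Fin 3) (Fin 3) ℝ)
    + (2:ℝ) • vecMulVec ρ ρ + (2:ℝ) • skew ρ)

/-!
`I - R_ρ(ρ)` is `2 / (1 + ‖ρ‖²)` times `‖ρ‖² I - ρρᵀ - [ρ]×`. In the trace pairing with a symmetric
`M` the skew part drops out, and the rest pairs to `‖ρ‖² Tr M - ρᵀMρ`, which is the quadratic form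
of `Tr(M) I - M` at `ρ`.
-/

section TracePairing

variable {m n R : Type*} [Fintype m] [Fintype n]

lemma trace_mul_vecMulVec [NonUnitalCommSemiring R] (A : Matrix m n R) (u : n → R) (v : m → R) :
    (A * vecMulVec u v).trace = v ⬝ᵥ (A *ᵥ u) := by
  rw [mul_vecMulVec, trace_vecMulVec, dotProduct_comm]

lemma trace_mul_eq_zero_of_isSymm_of_transpose_eq_neg [NonUnitalNonAssocRing R]
    [IsAddTorsionFree R] {S K : Matrix n n R} (hS : S.IsSymm) (hK : Kᵀ = -K) :
    (S * K).trace = 0 := by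
  refine self_eq_neg.mp ?_
  calc (S * K).trace = (Sᵀ * Kᵀ).trace := (trace_transpose_mul S K).symm
    _ = (S * -K).trace := by rw [hS.eq, hK]
    _ = -(S * K).trace := by rw [Matrix.mul_neg, trace_neg]

lemma dotProduct_trace_smul_one_sub_mulVec [CommRing R] [DecidableEq n] (A : Matrix n n R)
    (v : n → R) :
    v ⬝ᵥ ((A.trace • (1 : Matrix n n R) - A) *ᵥ v) = A.trace * (v ⬝ᵥ v) - v ⬝ᵥ (A *ᵥ v) := by
  rw [sub_mulVec, smul_mulVec, one_mulVec, dotProduct_sub, dotProduct_smul, smul_eq_mul]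

end TracePairing

lemma transpose_skew (x : Fin 3 → ℝ) : (skew x)ᵀ = -skew x := by
  ext i j
  fin_cases i <;> fin_cases j <;> simp [skew]

lemma one_add_dotProduct_self_ne_zero {n : Type*} [Fintype n] (v : n → ℝ) : 1 + v ⬝ᵥ v ≠ 0 := by
  have hv : 0 ≤ v ⬝ᵥ v := dotProduct_self_star_nonneg v
  positivity

lemma one_sub_rodr (ρ : Fin 3 → ℝ) :
    1 - rodr ρ = (2 / (1 + ρ ⬝ᵥ ρ)) •
      ((ρ ⬝ᵥ ρ) • (1 : Matrix (Fin 3) (Fin 3) ℝ) - vecMulVec ρ ρ - skew ρ) := by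
  have hρ := one_add_dotProduct_self_ne_zero ρ
  rw [rodr]
  match_scalars <;> field_simp
  ring

lemma trace_mul_one_sub_rodr {M : Matrix (Fin 3) (Fin 3) ℝ} (hM : M.IsSymm) (ρ : Fin 3 → ℝ) :
    (M * (1 - rodr ρ)).trace =
      2 / (1 + ρ ⬝ᵥ ρ) * (M.trace * (ρ ⬝ᵥ ρ) - ρ ⬝ᵥ (M *ᵥ ρ)) := by
  have hskew : (M * skew ρ).trace = 0 :=
    trace_mul_eq_zero_of_isSymm_of_transpose_eq_neg hM (transpose_skew ρ)
  rw [one_sub_rodr, mul_smul_comm, trace_smul, mul_sub, mul_sub, trace_sub, trace_sub, hskew,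
    trace_mul_vecMulVec, mul_smul_comm, mul_one, trace_smul, smul_eq_mul, smul_eq_mul, sub_zero,
    mul_comm (ρ ⬝ᵥ ρ)]

/-- eq. (74): for symmetric `M` with `M̄ = Tr(M)I₃ − M`,
`(1/4)Tr(M(I₃ − R_ρ(ρ))) = (1/2)(ρᵀM̄ρ)/(1+‖ρ‖²)`. -/
theorem trace_M_rodr (M : Matrix (Fin 3) (Fin 3) ℝ) (hM : M.IsSymm)
    (ρ : Fin 3 → ℝ) :
    (1/4) * (M * (1 - rodr ρ)).trace
      = (1/2) * (ρ ⬝ᵥ ((M.trace • (1 : Matrix (Fin 3) (Fin 3) ℝ) - M) *ᵥ ρ))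
          / (1 + ρ ⬝ᵥ ρ) := by
  rw [trace_mul_one_sub_rodr hM, dotProduct_trace_smul_one_sub_mulVec]
  ring
end
end

section
/- Let M ∈ ℝ^{3×3} be symmetric such that M̄ := Tr(M)·I₃ − M is positive semidefinite, and let λ̲ be the minimum eigenvalue of M̄. Then for every ρ ∈ ℝ³, with R_ρ(ρ) := (1/(1+‖ρ‖²))·((1−‖ρ‖²)I₃ + 2ρρᵀ + 2[ρ]×), one has ‖vex(P_a(M·R_ρ(ρ)))‖² ≥ λ̲·(1 − ‖ρ‖²/(1+‖ρ‖²))·(ρᵀM̄ρ)/(1+‖ρ‖²). -/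
open Matrix

noncomputable section

/-!
Write `M̄ = Tr(M) I₃ − M`. For symmetric `M`, the part `2 [ρ]×` of the numerator of `rodr ρ`
contributes `M̄ρ` to `vex(P_a(M·R_ρ(ρ)))` and the part `2 ρρᵀ` contributes `ρ × Mρ`, so that
`(1 + ‖ρ‖²) vex(P_a(M·R_ρ(ρ))) = M̄ρ + ρ × Mρ`. The two summands are orthogonal because
`M̄ρ` lies in the span of `ρ` and `Mρ`, hence `(1 + ‖ρ‖²)² ‖vex(P_a(M·R_ρ(ρ)))‖² ≥ ‖M̄ρ‖²`.
Finally `‖M̄ρ‖² ≥ λ̲ ρᵀM̄ρ`, since every eigenvalue `μ` of `M̄` satisfies `μ ≥ λ̲` and `μ ≥ 0`,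
hence `μ² ≥ λ̲ μ`.
-/

section PosSemidef

variable {n : Type*} [Fintype n] [DecidableEq n]

open scoped ComplexOrder MatrixOrder in
theorem posSemidef_mul_self_sub_smul {𝕜 : Type*} [RCLike 𝕜] {A : Matrix n n 𝕜}
    (hA : A.PosSemidef) {c : ℝ} (hc : ∀ i, c ≤ hA.isHermitian.eigenvalues i) :
    (A * A - c • A).PosSemidef := by
  have hsa : IsSelfAdjoint A := hA.isHermitian
  have hcfc : cfc (fun t : ℝ ↦ t * t - c * t) A = A * A - c • A := by
    rw [cfc_sub _ _ A, cfc_mul _ _ A, cfc_const_mul_id c A, cfc_id' ℝ A]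
  rw [← nonneg_iff_posSemidef, ← hcfc]
  refine cfc_nonneg fun t ht ↦ ?_
  obtain ⟨i, rfl⟩ := hA.isHermitian.spectrum_real_eq_range_eigenvalues ▸ ht
  exact sub_nonneg.2 (mul_le_mul_of_nonneg_right (hc i) (hA.eigenvalues_nonneg i))

theorem mul_dotProduct_mulVec_le_mulVec_dotProduct_mulVec {A : Matrix n n ℝ}
    (hA : A.PosSemidef) {c : ℝ} (hc : ∀ i, c ≤ hA.isHermitian.eigenvalues i) (x : n → ℝ) :
    c * (x ⬝ᵥ A *ᵥ x) ≤ A *ᵥ x ⬝ᵥ A *ᵥ x := by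
  have hsymm : x ⬝ᵥ (A * A) *ᵥ x = A *ᵥ x ⬝ᵥ A *ᵥ x := by
    rw [← mulVec_mulVec, dotProduct_mulVec, ← mulVec_transpose,
      ← conjTranspose_eq_transpose_of_trivial, hA.isHermitian.eq]
  have hform := (posSemidef_mul_self_sub_smul hA hc).dotProduct_mulVec_nonneg x
  rw [star_trivial, sub_mulVec, dotProduct_sub, hsymm, smul_mulVec, dotProduct_smul,
    smul_eq_mul] at hform
  exact sub_nonneg.1 hform

end PosSemidef

theorem smul_one_sub_mulVec_dotProduct_cross {R : Type*} [CommRing R] (c : R)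
    (A : Matrix (Fin 3) (Fin 3) R) (x : Fin 3 → R) :
    (c • 1 - A) *ᵥ x ⬝ᵥ x ⨯₃ (A *ᵥ x) = 0 := by
  simp only [sub_mulVec, smul_mulVec, one_mulVec, sub_dotProduct, smul_dotProduct, dot_self_cross,
    dot_cross_self, smul_zero, sub_zero]

theorem vexPa_add (A B : Matrix (Fin 3) (Fin 3) ℝ) : vexPa (A + B) = vexPa A + vexPa B := by
  ext i
  fin_cases i <;> simp [vexPa] <;> ring

theorem vexPa_smul (c : ℝ) (A : Matrix (Fin 3) (Fin 3) ℝ) : vexPa (c • A) = c • vexPa A := by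
  ext i
  fin_cases i <;> simp [vexPa] <;> ring

theorem vexPa_eq_zero_of_isSymm {A : Matrix (Fin 3) (Fin 3) ℝ} (hA : A.IsSymm) : vexPa A = 0 := by
  simp [vexPa, hA.apply 1 2, hA.apply 0 2, hA.apply 0 1]

theorem vexPa_vecMulVec (u v : Fin 3 → ℝ) : vexPa (vecMulVec u v) = (1 / 2 : ℝ) • v ⨯₃ u := by
  simp [vexPa, vecMulVec_apply, cross_apply, mul_comm]

theorem vexPa_mul_skew (A : Matrix (Fin 3) (Fin 3) ℝ) (x : Fin 3 → ℝ) :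
    vexPa (A * skew x) = (1 / 2 : ℝ) • (A.trace • 1 - Aᵀ) *ᵥ x := by
  ext i
  fin_cases i <;>
    simp [vexPa, skew, mul_apply, mulVec, dotProduct, trace, Fin.sum_univ_three] <;> ring

section Rodrigues

variable {M : Matrix (Fin 3) (Fin 3) ℝ}

theorem vexPa_mul_rodr (hM : M.IsSymm) (ρ : Fin 3 → ℝ) :
    vexPa (M * rodr ρ) =
      (1 / (1 + ρ ⬝ᵥ ρ)) • ((M.trace • 1 - M) *ᵥ ρ + ρ ⨯₃ (M *ᵥ ρ)) := by
  simp only [rodr, Matrix.mul_smul, Matrix.mul_add, Matrix.mul_one, mul_vecMulVec, vexPa_smul,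
    vexPa_add, vexPa_eq_zero_of_isSymm hM, vexPa_vecMulVec, vexPa_mul_skew, hM.eq]
  module

theorem vexPa_mul_rodr_dotProduct_self (hM : M.IsSymm) (ρ : Fin 3 → ℝ) :
    vexPa (M * rodr ρ) ⬝ᵥ vexPa (M * rodr ρ) =
      ((M.trace • 1 - M) *ᵥ ρ ⬝ᵥ (M.trace • 1 - M) *ᵥ ρ +
        ρ ⨯₃ (M *ᵥ ρ) ⬝ᵥ ρ ⨯₃ (M *ᵥ ρ)) / (1 + ρ ⬝ᵥ ρ) ^ 2 := by
  have horth := smul_one_sub_mulVec_dotProduct_cross M.trace M ρ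
  rw [vexPa_mul_rodr hM, smul_dotProduct, dotProduct_smul, add_dotProduct, dotProduct_add,
    dotProduct_add, dotProduct_comm (ρ ⨯₃ _), horth, smul_eq_mul, smul_eq_mul]
  field_simp
  ring

end Rodrigues

/-- ineq. (76): for symmetric `M` with `M̄ = Tr(M)I₃ − M`
positive semidefinite and `λ̲` the minimum eigenvalue of `M̄`,
`‖vex(P_a(M·R_ρ(ρ)))‖² ≥ λ̲(1 − ‖ρ‖²/(1+‖ρ‖²))(ρᵀM̄ρ)/(1+‖ρ‖²)`. -/
theorem vexPa_M_rodr_sq_norm_ge (M : Matrix (Fin 3) (Fin 3) ℝ) (hM : M.IsSymm)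
    (hpsd : (M.trace • (1 : Matrix (Fin 3) (Fin 3) ℝ) - M).PosSemidef)
    (lam : ℝ) (hlam : lam = ⨅ i, hpsd.1.eigenvalues i)
    (ρ : Fin 3 → ℝ) :
    vexPa (M * rodr ρ) ⬝ᵥ vexPa (M * rodr ρ)
      ≥ lam * (1 - (ρ ⬝ᵥ ρ)/(1 + ρ ⬝ᵥ ρ))
          * ((ρ ⬝ᵥ ((M.trace • (1 : Matrix (Fin 3) (Fin 3) ℝ) - M) *ᵥ ρ))
              / (1 + ρ ⬝ᵥ ρ)) := by
  have hlam_le : ∀ i, lam ≤ hpsd.isHermitian.eigenvalues i := fun i ↦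
    hlam ▸ ciInf_le (Set.finite_range _).bddBelow i
  have hspec := mul_dotProduct_mulVec_le_mulVec_dotProduct_mulVec hpsd hlam_le ρ
  have hcross : 0 ≤ ρ ⨯₃ (M *ᵥ ρ) ⬝ᵥ ρ ⨯₃ (M *ᵥ ρ) := dotProduct_self_star_nonneg _
  have hρ : 0 ≤ ρ ⬝ᵥ ρ := dotProduct_self_star_nonneg ρ
  calc
    _ = _ := vexPa_mul_rodr_dotProduct_self hM ρ
    _ ≥ lam * (ρ ⬝ᵥ (M.trace • 1 - M) *ᵥ ρ) / (1 + ρ ⬝ᵥ ρ) ^ 2 := by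
      gcongr
      linarith
    _ = _ := by
      field_simp
      ring
end
end
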